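/- Suppose m = ρ·l·(l−1) for an integer ρ ≥ 1. Then for every degree d with 2m − m/l < d ≤ 2m: (i) v_d(I^{(m)}) = l + 1 if d = 2m − w(l−1) for some integer w with 0 ≤ w ≤ ρ − 1; (ii) v_d(I^{(m)}) = l if d = 2m + 1 − p − w(l−1) where either (w = 0 and 2 ≤ p ≤ l−2), or (1 ≤ w ≤ ρ−1 and p ∈ {0, 2, 3, …, l−2}), or (w = ρ and p = 0, i.e. d = 2m − m/l + 1); (iii) v_d(I^{(m)}) = 0 for every other d in this range. -/

import Mathlib

open MvPolynomial Filter

/-- The degree-`d` homogeneous component of a homogeneous ideal `J ⊆ K[x,y,z]`,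
as a `K`-vector subspace. -/
noncomputable def degComp {K : Type*} [Field K] (J : Ideal (MvPolynomial (Fin 3) K)) (d : ℕ) :
    Submodule K (MvPolynomial (Fin 3) K) :=
  Submodule.restrictScalars K J ⊓ homogeneousSubmodule (Fin 3) K d

/-- `dim_K J_d`. -/
noncomputable def hdim {K : Type*} [Field K] (J : Ideal (MvPolynomial (Fin 3) K)) (d : ℕ) : ℕ :=
  Module.finrank K (degComp J d)

/-- The subspace `R_1 · J_{d-1}` of products of linear forms with degree-`(d-1)` elements. -/
noncomputable def oneGen {K : Type*} [Field K] (J : Ideal (MvPolynomial (Fin 3) K)) (d : ℕ) :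
    Submodule K (MvPolynomial (Fin 3) K) :=
  Submodule.span K
    {x | ∃ f ∈ homogeneousSubmodule (Fin 3) K 1, ∃ g ∈ degComp J (d - 1), x = f * g}

/-- `v_d(J) = dim_K J_d / (R_1 · J_{d-1})`, the number of minimal generators of `J`
in degree `d`. -/
noncomputable def vnum {K : Type*} [Field K] (J : Ideal (MvPolynomial (Fin 3) K)) (d : ℕ) : ℕ :=
  Module.finrank K
    (↥(degComp J d) ⧸ Submodule.comap (degComp J d).subtype (oneGen J d))

/-!
Choose coordinates in which the line is `x₀ = 0` and the point off the line is `(1 : 0 : 0)`, and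
expand forms in powers of `x₀`. If `h(x₁, x₂)` is the form of degree `l` cutting out the points on
the line, then `∑ x₀ʲ fⱼ` lies in `I^{(m)}` iff `h^{m-j} ∣ fⱼ` and `fⱼ` has order at least `m` at
the origin, for all `j`. In degree `d` the `j`-th coefficients therefore form the space of all
binary forms `h^{m-j} g` of degree `d - j` once `d ≥ max (m + j) (l (m - j) + j)`, and vanish
before. Multiplying by linear forms carries each nonzero coefficient space onto the next one, so
generators arise only where such a space first appears: `j = d - m` contributes `l` of them, and a
`j` with `l (m - j) + j = d` contributes one. Such a `j` exists iff `l - 1` divides `d - m`.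
-/

section PointIdeal

variable {K : Type*} [Field K] {σ : Type*}

/-- The ideal of all polynomials whose homogeneous components vanish at `q`. For `q ≠ 0` it is the
homogeneous prime ideal of the corresponding point of projective space. It is encoded as the kernel
of the restriction to the parametrized line `t ↦ t • q`. -/
noncomputable def pointIdeal (q : σ → K) : Ideal (MvPolynomial σ K) :=
  RingHom.ker (aeval fun i => Polynomial.C (q i) * Polynomial.X :
    MvPolynomial σ K →ₐ[K] Polynomial K)

lemma mem_pointIdeal {q : σ → K} {F : MvPolynomial σ K} :
    F ∈ pointIdeal q ↔ aeval (fun i => Polynomial.C (q i) * Polynomial.X) F = 0 :=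
  Iff.rfl

lemma coeff_aeval_C_mul_X (q : σ → K) (F : MvPolynomial σ K) (n : ℕ) :
    (aeval (fun i => Polynomial.C (q i) * Polynomial.X) F).coeff n =
      eval q (homogeneousComponent n F) := by
  induction F using MvPolynomial.induction_on' with
  | monomial s c =>
    rw [homogeneousComponent_of_mem (isHomogeneous_monomial c rfl), aeval_monomial]
    have restrict : (s.prod fun i e => (Polynomial.C (q i) * Polynomial.X) ^ e) =
        Polynomial.C (s.prod fun i e => q i ^ e) * Polynomial.X ^ s.degree := by
      simp only [Finsupp.prod, mul_pow, Finset.prod_mul_distrib, Finset.prod_pow_eq_pow_sum,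
        Finsupp.degree_apply, map_prod, map_pow]
    rw [restrict, Polynomial.algebraMap_apply, Polynomial.coeff_C_mul,
      Polynomial.coeff_C_mul_X_pow]
    split_ifs <;> simp [eval_monomial]
  | add F G hF hG => rw [map_add, Polynomial.coeff_add, hF, hG, map_add, map_add]

lemma mem_pointIdeal_iff_eval_homogeneousComponent {q : σ → K} {F : MvPolynomial σ K} :
    F ∈ pointIdeal q ↔ ∀ n, eval q (homogeneousComponent n F) = 0 := by
  simp only [mem_pointIdeal, Polynomial.ext_iff, coeff_aeval_C_mul_X, Polynomial.coeff_zero]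

lemma pointIdeal_eq_span {q : σ → K} {k : σ} (hk : q k ≠ 0) :
    pointIdeal q = Ideal.span (Set.range fun i => C (q k) * X i - C (q i) * X k) := by
  set I := Ideal.span (Set.range fun i => C (q k) * X i - C (q i) * X k)
  refine le_antisymm (fun F hF => ?_) ?_
  · -- Modulo `I`, restricting to the line and substituting `t = X k / q k` changes nothing.
    have factor : Ideal.Quotient.mkₐ K I = ((Ideal.Quotient.mkₐ K I).comp
        (Polynomial.aeval (C (q k)⁻¹ * X k))).comp
          (aeval fun i => Polynomial.C (q i) * Polynomial.X) := by
      refine algHom_ext fun i => Ideal.Quotient.eq.mpr ?_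
      have hi : C (q k)⁻¹ * (C (q k) * X i - C (q i) * X k) ∈ I :=
        I.mul_mem_left _ (Ideal.subset_span ⟨i, rfl⟩)
      convert hi using 1
      rw [mul_sub, ← mul_assoc, ← C_mul, inv_mul_cancel₀ hk]
      simp only [RingHom.coe_coe, aeval_X, map_mul, Polynomial.aeval_C, algebraMap_eq,
        Polynomial.aeval_X, C_1, one_mul, sub_right_inj]
      ring
    rw [← Ideal.Quotient.eq_zero_iff_mem, ← Ideal.Quotient.mkₐ_eq_mk K, factor,
      AlgHom.comp_apply, mem_pointIdeal.mp hF, map_zero]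
  · rw [Ideal.span_le]
    rintro _ ⟨i, rfl⟩
    rw [SetLike.mem_coe, mem_pointIdeal]
    simp only [map_sub, map_mul, algHom_C, aeval_X, Polynomial.algebraMap_eq]
    ring

end PointIdeal

section LinearChangeOfCoordinates

variable {K : Type*} [Field K]

lemma exists_linearEquiv_apply_eq_single {n : ℕ} (L : Module.Dual K (Fin (n + 1) → K))
    {q : Fin (n + 1) → K} (hq : L q ≠ 0) :
    ∃ e : (Fin (n + 1) → K) ≃ₗ[K] (Fin (n + 1) → K),
      e q = Pi.single 0 1 ∧ ∀ v, L v = 0 → e v 0 = 0 := by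
  have hker : Module.finrank K (LinearMap.ker L) = n := by
    have := Module.Dual.finrank_ker_add_one_of_ne_zero (f := L) (by rintro rfl; exact hq rfl)
    simpa using this
  let b := Module.Basis.mkFinCons q (Module.finBasisOfFinrankEq K (LinearMap.ker L) hker)
    (fun c v hv hcv => by simpa [LinearMap.mem_ker.mp hv, hq] using congr(L $hcv))
    (fun v => ⟨-(L v / L q), by simp [hq]⟩)
  have hb0 : b 0 = q := by simp [b]
  have hbsucc : ∀ i : Fin n, L (b i.succ) = 0 := fun i => by simp [b]
  refine ⟨b.equivFun, by simp [← hb0, Finsupp.single_eq_pi_single], fun v hv => ?_⟩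
  have hLv : L v = b.equivFun v 0 * L q := by
    conv_lhs => rw [← b.sum_equivFun v, map_sum, Fin.sum_univ_succ]
    simp only [map_smul, hb0, hbsucc, smul_eq_mul, mul_zero, Finset.sum_const_zero, add_zero]
  exact (mul_eq_zero.mp (hLv.symm.trans hv)).resolve_right hq

variable {σ : Type*} [Fintype σ] [DecidableEq σ]

/-- Precomposition of polynomials, viewed as functions on `σ → K`, with a linear map. -/
noncomputable def linearSubst (f : (σ → K) →ₗ[K] (σ → K)) :
    MvPolynomial σ K →ₐ[K] MvPolynomial σ K :=
  bind₁ (LinearMap.toMatrix' f).toMvPolynomial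

lemma linearSubst_id : linearSubst (LinearMap.id : (σ → K) →ₗ[K] (σ → K)) = AlgHom.id K _ := by
  simp [linearSubst]

lemma linearSubst_comp (f g : (σ → K) →ₗ[K] (σ → K)) :
    linearSubst (f ∘ₗ g) = (linearSubst g).comp (linearSubst f) := by
  refine algHom_ext fun i => ?_
  simp only [linearSubst, LinearMap.toMatrix'_comp, AlgHom.comp_apply, bind₁_X_right,
    Matrix.toMvPolynomial_mul]

lemma linearSubst_mem_pointIdeal_iff (f : (σ → K) →ₗ[K] (σ → K)) {q : σ → K}
    {F : MvPolynomial σ K} : linearSubst f F ∈ pointIdeal q ↔ F ∈ pointIdeal (f q) := by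
  have restrict : (aeval fun i => Polynomial.C (q i) * Polynomial.X).comp (linearSubst f) =
      aeval fun i => Polynomial.C (f q i) * Polynomial.X := by
    refine algHom_ext fun i => ?_
    rw [← LinearMap.toMatrix'_mulVec f q]
    simp [linearSubst, Matrix.toMvPolynomial, Matrix.mulVec, dotProduct, ← C_mul_X_eq_monomial,
      ← mul_assoc, ← Finset.sum_mul]
  rw [mem_pointIdeal, mem_pointIdeal, ← restrict, AlgHom.comp_apply]

/-- `linearSubst` for an invertible linear map. -/
noncomputable def linearSubstEquiv (e : (σ → K) ≃ₗ[K] (σ → K)) :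
    MvPolynomial σ K ≃ₐ[K] MvPolynomial σ K :=
  AlgEquiv.ofAlgHom (linearSubst e.toLinearMap) (linearSubst e.symm.toLinearMap)
    (by rw [← linearSubst_comp, LinearEquiv.symm_comp, linearSubst_id])
    (by rw [← linearSubst_comp, LinearEquiv.comp_symm, linearSubst_id])

lemma linearSubst_isHomogeneous (f : (σ → K) →ₗ[K] (σ → K)) {F : MvPolynomial σ K} {d : ℕ}
    (hF : F.IsHomogeneous d) : (linearSubst f F).IsHomogeneous d := by
  simpa [linearSubst] using hF.aeval _ (LinearMap.toMatrix' f).toMvPolynomial_isHomogeneous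

lemma linearSubstEquiv_isHomogeneous_iff (e : (σ → K) ≃ₗ[K] (σ → K)) {F : MvPolynomial σ K}
    {d : ℕ} : (linearSubstEquiv e F).IsHomogeneous d ↔ F.IsHomogeneous d := by
  refine ⟨fun h => ?_, linearSubst_isHomogeneous _⟩
  have := linearSubst_isHomogeneous e.symm.toLinearMap h
  rwa [show linearSubst e.symm.toLinearMap (linearSubstEquiv e F) = F from
    (linearSubstEquiv e).symm_apply_apply F] at this

lemma map_linearSubstEquiv_homogeneousSubmodule (e : (σ → K) ≃ₗ[K] (σ → K)) (d : ℕ) :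
    (homogeneousSubmodule σ K d).map (linearSubstEquiv e).toLinearMap =
      homogeneousSubmodule σ K d := by
  ext F
  refine (Submodule.mem_map_equiv _ (e := (linearSubstEquiv e).toLinearEquiv)).trans ?_
  rw [mem_homogeneousSubmodule, ← linearSubstEquiv_isHomogeneous_iff e]
  exact iff_of_eq (congrArg (IsHomogeneous · d) ((linearSubstEquiv e).apply_symm_apply F))

end LinearChangeOfCoordinates

section Coefficientwise

variable {K : Type*} [Field K] {A : Type*} [CommRing A]

lemma pow_dvd_coeff_mul {a : A} {m : ℕ} {F : Polynomial A} (hF : ∀ j, a ^ (m - j) ∣ F.coeff j)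
    (G : Polynomial A) (j : ℕ) : a ^ (m - j) ∣ (G * F).coeff j := by
  rw [Polynomial.coeff_mul]
  refine Finset.dvd_sum fun x hx => ?_
  have := Finset.HasAntidiagonal.mem_antidiagonal.mp hx
  exact ((pow_dvd_pow a (by lia)).trans (hF x.2)).mul_left _

lemma mem_span_X_C_pow_iff {a : A} {m : ℕ} {F : Polynomial A} :
    F ∈ Ideal.span {Polynomial.X, Polynomial.C a} ^ m ↔ ∀ j, a ^ (m - j) ∣ F.coeff j := by
  refine ⟨fun hF => ?_, fun hF => ?_⟩
  · induction hF using Submodule.pow_induction_on_left' with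
    | algebraMap G => simp
    | add F G m _ _ ihF ihG => exact fun j => by simpa using dvd_add (ihF j) (ihG j)
    | mem_mul G hG m F _ ih =>
      obtain ⟨u, v, rfl⟩ := Ideal.mem_span_pair.mp hG
      intro j
      rw [add_mul, mul_assoc, mul_assoc, Polynomial.coeff_add]
      refine dvd_add (pow_dvd_coeff_mul (fun i => ?_) u j) (pow_dvd_coeff_mul (fun i => ?_) v j)
      · cases i with
        | zero => simp
        | succ i => simpa using ih i
      · rw [Polynomial.coeff_C_mul]
        exact (pow_dvd_pow a (show m + 1 - i ≤ (m - i) + 1 by lia)).trans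
          (pow_succ' a _ ▸ mul_dvd_mul_left a (ih i))
  · rw [F.as_sum_support_C_mul_X_pow]
    refine Ideal.sum_mem _ fun j _ => ?_
    obtain ⟨b, hb⟩ := hF j
    have generator_mem : Polynomial.C a ^ (m - j) * Polynomial.X ^ j ∈
        Ideal.span {Polynomial.X, Polynomial.C a} ^ m := by
      refine Ideal.pow_le_pow_right (show m ≤ (m - j) + j by lia) ?_
      rw [pow_add]
      exact Ideal.mul_mem_mul (Ideal.pow_mem_pow (Ideal.subset_span (by simp)) _)
        (Ideal.pow_mem_pow (Ideal.subset_span (by simp)) _)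
    rw [hb, mul_comm _ b, Polynomial.C_mul, Polynomial.C_pow, mul_assoc]
    exact Ideal.mul_mem_left _ _ generator_mem

variable [Algebra K A]

/-- The polynomials whose `j`-th coefficient lies in `D j` for all `j`. -/
def coeffwise (D : ℕ → Submodule K A) : Submodule K (Polynomial A) where
  carrier := {F | ∀ j, F.coeff j ∈ D j}
  add_mem' hF hG j := by rw [Polynomial.coeff_add]; exact add_mem (hF j) (hG j)
  zero_mem' j := by simp
  smul_mem' c F hF j := by rw [Polynomial.coeff_smul]; exact Submodule.smul_mem _ c (hF j)

lemma mem_coeffwise {D : ℕ → Submodule K A} {F : Polynomial A} :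
    F ∈ coeffwise D ↔ ∀ j, F.coeff j ∈ D j :=
  Iff.rfl

lemma monomial_mem_coeffwise {D : ℕ → Submodule K A} {j : ℕ} {a : A} (ha : a ∈ D j) :
    Polynomial.monomial j a ∈ coeffwise D := by
  intro i
  rw [Polynomial.coeff_monomial]
  split_ifs with h
  · exact h ▸ ha
  · exact zero_mem _

lemma finrank_coeffwise {D : ℕ → Submodule K A} {N : ℕ} (hD : ∀ j, N ≤ j → D j = ⊥)
    [∀ j, Module.Finite K (D j)] :
    Module.finrank K (coeffwise D) = ∑ j ∈ Finset.range N, Module.finrank K (D j) := by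
  let coeffs : coeffwise D →ₗ[K] (j : Fin N) → D j :=
    { toFun F j := ⟨F.1.coeff j, F.2 j⟩
      map_add' F G := by ext; simp
      map_smul' c F := by ext; simp }
  have coeffs_bijective : Function.Bijective coeffs := by
    refine ⟨fun F G hFG => Subtype.ext (Polynomial.ext fun j => ?_), fun g => ?_⟩
    · rcases lt_or_ge j N with hj | hj
      · exact congrArg Subtype.val (congrFun hFG ⟨j, hj⟩)
      · have hF := F.2 j
        have hG := G.2 j
        rw [hD j hj, Submodule.mem_bot] at hF hG
        rw [hF, hG]
    · refine ⟨⟨∑ j : Fin N, Polynomial.monomial j (g j).1,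
        sum_mem fun j _ => monomial_mem_coeffwise (g j).2⟩, funext fun j => Subtype.ext ?_⟩
      simp [coeffs, Polynomial.coeff_monomial, Fin.val_inj]
  rw [(LinearEquiv.ofBijective coeffs coeffs_bijective).finrank_eq, Module.finrank_pi_fintype,
    Finset.sum_range]

/-- The coefficient spaces of `(⟨X⟩ + H) * coeffwise D`. -/
def linearStep (H : Submodule K A) (D : ℕ → Submodule K A) : ℕ → Submodule K A
  | 0 => H * D 0
  | j + 1 => D j ⊔ H * D (j + 1)

lemma span_X_sup_map_C_mul_coeffwise (H : Submodule K A) (D : ℕ → Submodule K A) :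
    (Submodule.span K {Polynomial.X} ⊔ H.map Polynomial.CAlgHom.toLinearMap) * coeffwise D =
      coeffwise (linearStep H D) := by
  have mul_le_linearStep : ∀ j, H * D j ≤ linearStep H D j
    | 0 => le_rfl
    | j + 1 => le_sup_right
  apply le_antisymm
  · rw [Submodule.sup_mul, sup_le_iff, Submodule.mul_le, Submodule.mul_le]
    refine ⟨fun G hG F hF j => ?_, ?_⟩
    · obtain ⟨c, rfl⟩ := Submodule.mem_span_singleton.mp hG
      rw [smul_mul_assoc, Polynomial.coeff_smul]
      refine Submodule.smul_mem _ c ?_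
      cases j with
      | zero => simp
      | succ j => simpa using! Submodule.mem_sup_left (hF j)
    · rintro _ ⟨h, hh, rfl⟩ F hF j
      simpa using! mul_le_linearStep j (Submodule.mul_mem_mul hh (hF j))
  · set T := (Submodule.span K {Polynomial.X} ⊔ H.map Polynomial.CAlgHom.toLinearMap) * coeffwise D
    have shift_mem (j : ℕ) {a : A} (ha : a ∈ D j) : Polynomial.monomial (j + 1) a ∈ T := by
      rw [← Polynomial.X_mul_monomial]
      exact Submodule.mul_mem_mul
        (Submodule.mem_sup_left (Submodule.mem_span_singleton_self Polynomial.X))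
        (monomial_mem_coeffwise ha)
    have mul_le (j : ℕ) : H * D j ≤ T.comap ((Polynomial.monomial j).restrictScalars K) := by
      refine Submodule.mul_le.mpr fun h hh a ha => ?_
      rw [Submodule.mem_comap, LinearMap.restrictScalars_apply, ← Polynomial.C_mul_monomial]
      exact Submodule.mul_mem_mul (Submodule.mem_sup_right ⟨h, hh, rfl⟩) (monomial_mem_coeffwise ha)
    have linearStep_le : ∀ j,
        linearStep H D j ≤ T.comap ((Polynomial.monomial j).restrictScalars K)
      | 0 => mul_le 0
      | j + 1 => sup_le (fun a ha => shift_mem j ha) (mul_le (j + 1))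
    intro F hF
    rw [F.as_sum_support]
    exact sum_mem fun j _ => linearStep_le j (hF j)

end Coefficientwise

section FinSuccEquiv

variable {K : Type*} [Field K] {n : ℕ}

lemma map_finSuccEquiv_homogeneousSubmodule_one :
    (homogeneousSubmodule (Fin (n + 1)) K 1).map (finSuccEquiv K n).toLinearMap =
      Submodule.span K {Polynomial.X} ⊔
        (homogeneousSubmodule (Fin n) K 1).map Polynomial.CAlgHom.toLinearMap := by
  have range_X : Set.range (fun i => finSuccEquiv K n (X i)) =
      {Polynomial.X} ∪ Set.range fun i => Polynomial.C (X i) := by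
    ext F
    simp [Fin.exists_fin_succ, finSuccEquiv_X_zero, finSuccEquiv_X_succ, eq_comm]
  simp only [homogeneousSubmodule_one_eq_span_X, Submodule.map_span, ← Set.range_comp,
    ← Submodule.span_union]
  exact congrArg (Submodule.span K) range_X

lemma isHomogeneous_iff_coeff_finSuccEquiv {F : MvPolynomial (Fin (n + 1)) K} {d : ℕ} :
    F.IsHomogeneous d ↔ ∀ j, (finSuccEquiv K n F).coeff j = 0 ∨
      ∃ k, j + k = d ∧ ((finSuccEquiv K n F).coeff j).IsHomogeneous k := by
  have degree_cons (s : Fin (n + 1) →₀ ℕ) : s.degree = s 0 + s.tail.degree := by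
    simp [Finsupp.degree_eq_sum, Fin.sum_univ_succ, Finsupp.tail_apply]
  refine ⟨fun hF j => ?_, fun hF s hs => ?_⟩
  · rw [or_iff_not_imp_left]
    intro hj
    obtain ⟨s, hs⟩ := ne_zero_iff.mp hj
    rw [finSuccEquiv_coeff_coeff] at hs
    have hd : j + s.degree = d := by
      simpa [degree_cons] using not_imp_comm.mp hF.coeff_eq_zero hs
    exact ⟨s.degree, hd, hF.finSuccEquiv_coeff_isHomogeneous j _ hd⟩
  · have hs' : coeff s.tail ((finSuccEquiv K n F).coeff (s 0)) ≠ 0 := by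
      rwa [finSuccEquiv_coeff_coeff, Finsupp.cons_tail]
    rcases hF (s 0) with h | ⟨k, hk, h⟩
    · simp [h] at hs'
    · calc Finsupp.weight 1 s = s.degree :=
          (DFunLike.congr_fun Finsupp.degree_eq_weight_one s).symm
        _ = s 0 + s.tail.degree := degree_cons s
        _ = d := by rw [not_imp_comm.mp h.coeff_eq_zero hs', hk]

lemma mem_idealOfVars_iff {σ : Type*} {F : MvPolynomial σ K} :
    F ∈ idealOfVars σ K ↔ constantCoeff F = 0 := by
  rw [← pow_one (idealOfVars σ K), mem_pow_idealOfVars_iff']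
  simp [constantCoeff_eq, Finsupp.degree_eq_zero_iff]

lemma mem_pointIdeal_cons_one_zero_iff {F : MvPolynomial (Fin (n + 1)) K} :
    F ∈ pointIdeal (Fin.cons 1 0 : Fin (n + 1) → K) ↔
      finSuccEquiv K n F ∈ (idealOfVars (Fin n) K).map Polynomial.C := by
  have restrict : (aeval fun i => Polynomial.C ((Fin.cons 1 0 : Fin (n + 1) → K) i) *
      Polynomial.X) = (Polynomial.mapAlgHom (aeval 0 : MvPolynomial (Fin n) K →ₐ[K] K)).comp
        (finSuccEquiv K n).toAlgHom := by
    refine algHom_ext fun i => ?_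
    cases i using Fin.cases <;> simp [finSuccEquiv_X_zero, finSuccEquiv_X_succ]
  rw [mem_pointIdeal, restrict, Ideal.mem_map_C_iff, Polynomial.ext_iff]
  simp [mem_idealOfVars_iff, constantCoeff_eq]

lemma mem_pointIdeal_cons_zero_iff {r : Fin n → K} {F : MvPolynomial (Fin (n + 1)) K} :
    F ∈ pointIdeal (Fin.cons 0 r : Fin (n + 1) → K) ↔
      (finSuccEquiv K n F).coeff 0 ∈ pointIdeal r := by
  have restrict : (aeval fun i => Polynomial.C ((Fin.cons 0 r : Fin (n + 1) → K) i) *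
      Polynomial.X) = ((aeval fun i => Polynomial.C (r i) * Polynomial.X).comp
        ((Polynomial.aeval 0).restrictScalars K)).comp (finSuccEquiv K n).toAlgHom := by
    refine algHom_ext fun i => ?_
    cases i using Fin.cases <;> simp [finSuccEquiv_X_zero, finSuccEquiv_X_succ]
  rw [mem_pointIdeal, restrict, mem_pointIdeal, Polynomial.coeff_zero_eq_aeval_zero]
  rfl

lemma mem_pow_iff_of_ringEquiv {R S : Type*} [CommRing R] [CommRing S] (e : R ≃+* S)
    {I : Ideal R} {J : Ideal S} (hIJ : ∀ x, x ∈ I ↔ e x ∈ J) {m : ℕ} {x : R} :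
    x ∈ I ^ m ↔ e x ∈ J ^ m := by
  have hI : I = J.map e.symm := by
    ext y
    rw [hIJ, Ideal.map_symm, Ideal.mem_comap]
  rw [hI, ← Ideal.map_pow, Ideal.map_symm, Ideal.mem_comap]

lemma mem_pointIdeal_cons_one_zero_pow_iff {m : ℕ} {F : MvPolynomial (Fin (n + 1)) K} :
    F ∈ pointIdeal (Fin.cons 1 0 : Fin (n + 1) → K) ^ m ↔
      ∀ j, (finSuccEquiv K n F).coeff j ∈ idealOfVars (Fin n) K ^ m := by
  rw [mem_pow_iff_of_ringEquiv (finSuccEquiv K n).toRingEquiv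
    fun _ => mem_pointIdeal_cons_one_zero_iff, ← Ideal.map_pow, Ideal.mem_map_C_iff]
  rfl

end FinSuccEquiv

section BinaryForms

variable {K : Type*} [Field K]

/-- The linear form on `K²` vanishing at `r`. -/
noncomputable def pointForm (r : Fin 2 → K) : MvPolynomial (Fin 2) K :=
  C (r 1) * X 0 - C (r 0) * X 1

lemma pointForm_isHomogeneous (r : Fin 2 → K) : (pointForm r).IsHomogeneous 1 :=
  (isHomogeneous_C_mul_X _ _).sub (isHomogeneous_C_mul_X _ _)

lemma eval_pointForm (r s : Fin 2 → K) : eval s (pointForm r) = r 1 * s 0 - r 0 * s 1 := by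
  simp [pointForm]

lemma pointForm_ne_zero {r : Fin 2 → K} (hr : r ≠ 0) : pointForm r ≠ 0 := by
  intro h
  have h0 : r 0 = 0 := by simpa [h] using eval_pointForm r ![0, 1]
  have h1 : r 1 = 0 := by simpa [h] using (eval_pointForm r ![1, 0]).symm
  exact hr (funext (Fin.forall_fin_two.mpr ⟨h0, h1⟩))

lemma irreducible_pointForm {r : Fin 2 → K} (hr : r ≠ 0) : Irreducible (pointForm r) := by
  have hne := pointForm_ne_zero hr
  refine irreducible_of_totalDegree_eq_one ((pointForm_isHomogeneous r).totalDegree hne)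
    fun c hc => isUnit_iff_ne_zero.mpr ?_
  rintro rfl
  exact hne (MvPolynomial.ext _ _ fun s => by simpa using hc s)

lemma not_pointForm_dvd_pointForm {r s : Fin 2 → K} (hr : r ≠ 0) (hrs : ∀ c : K, c • r ≠ s) :
    ¬ pointForm r ∣ pointForm s := by
  rintro ⟨g, hg⟩
  have hdet : s 1 * r 0 - s 0 * r 1 = 0 := by
    rw [← eval_pointForm, hg, map_mul, eval_pointForm, mul_comm (r 1), sub_self, zero_mul]
  obtain ⟨k, hk⟩ := Function.ne_iff.mp hr
  refine hrs (s k / r k) (funext fun i => ?_)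
  rw [Pi.smul_apply, smul_eq_mul, div_mul_eq_mul_div, div_eq_iff hk]
  fin_cases k <;> fin_cases i <;> simp <;> grind

lemma mem_pointIdeal_iff_pointForm_dvd {r : Fin 2 → K} (hr : r ≠ 0) {f : MvPolynomial (Fin 2) K} :
    f ∈ pointIdeal r ↔ pointForm r ∣ f := by
  obtain ⟨k, hk⟩ := Function.ne_iff.mp hr
  have range_eq : (Set.range fun i => C (r k) * X i - C (r i) * X k) = {0, pointForm r} ∨
      (Set.range fun i => C (r k) * X i - C (r i) * X k) = {0, -pointForm r} := by
    fin_cases k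
    · right
      ext g
      simp [pointForm, Fin.exists_fin_two, eq_comm]
    · left
      ext g
      simp [pointForm, Fin.exists_fin_two, eq_comm, or_comm]
  rw [pointIdeal_eq_span hk]
  rcases range_eq with h | h <;>
    simp [h, Ideal.mem_span_singleton]

lemma mem_pointIdeal_cons_zero_pow_iff {r : Fin 2 → K} (hr : r ≠ 0) {m : ℕ}
    {F : MvPolynomial (Fin 3) K} :
    F ∈ pointIdeal (Fin.cons 0 r : Fin 3 → K) ^ m ↔
      ∀ j, pointForm r ^ (m - j) ∣ (finSuccEquiv K 2 F).coeff j := by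
  rw [← mem_span_X_C_pow_iff]
  refine mem_pow_iff_of_ringEquiv (finSuccEquiv K 2).toRingEquiv fun G => ?_
  rw [mem_pointIdeal_cons_zero_iff, mem_pointIdeal_iff_pointForm_dvd hr,
    ← pow_one (Ideal.span _), mem_span_X_C_pow_iff]
  refine ⟨?_, fun h => by simpa using h 0⟩
  rintro h (_ | j)
  · simpa using h
  · simp

variable {ι : Type*} [Fintype ι] {r : ι → Fin 2 → K}

lemma prod_pointForm_isHomogeneous (r : ι → Fin 2 → K) :
    (∏ i, pointForm (r i)).IsHomogeneous (Fintype.card ι) := by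
  simpa using IsHomogeneous.prod Finset.univ (fun i => pointForm (r i)) (fun _ => 1)
    fun i _ => pointForm_isHomogeneous (r i)

lemma prod_pointForm_pow_dvd_iff (hr : ∀ i, r i ≠ 0)
    (hdist : ∀ i j, i ≠ j → ∀ c : K, c • r i ≠ r j) {t : ℕ} {f : MvPolynomial (Fin 2) K} :
    (∏ i, pointForm (r i)) ^ t ∣ f ↔ ∀ i, pointForm (r i) ^ t ∣ f := by
  refine ⟨fun h i => ?_, fun h => ?_⟩
  · exact (pow_dvd_pow_of_dvd
      (Finset.dvd_prod_of_mem (fun i => pointForm (r i)) (Finset.mem_univ i)) t).trans h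
  rw [← Finset.prod_pow]
  refine Fintype.prod_dvd_of_isRelPrime (fun i j hij => IsRelPrime.pow ?_) h
  exact (irreducible_pointForm (hr i)).isRelPrime_iff_not_dvd.mpr
    (not_pointForm_dvd_pointForm (hr i) (hdist i j hij))

lemma finrank_homogeneousSubmodule_fin_two (k : ℕ) :
    Module.finrank K (homogeneousSubmodule (Fin 2) K k) = k + 1 := by
  have support_eq : {s : Fin 2 →₀ ℕ | s.degree = k} =
      ↑(Finset.finsuppAntidiag (Finset.univ : Finset (Fin 2)) k) := by
    ext s
    simp [Finsupp.degree_eq_sum]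
  rw [homogeneousSubmodule_eq_finsupp_supported]
  refine (AddMonoidAlgebra.supportedEquivFinsupp (S := K) (R := K)
    {s : Fin 2 →₀ ℕ | s.degree = k}).finrank_eq.trans ?_
  rw [support_eq, Module.finrank_finsupp_self]
  refine (Fintype.card_coe _).trans ?_
  simp [Finset.card_finsuppAntidiag_nat_eq_choose, add_comm 1 k]

end BinaryForms

section CoefficientSpaces

variable {K : Type*} [Field K] {σ : Type*} {h f : MvPolynomial σ K} {l m d j k : ℕ}

lemma exists_isHomogeneous_eq_mul_of_dvd (hh : h.IsHomogeneous k) (hf : f.IsHomogeneous d)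
    (hf0 : f ≠ 0) (hdvd : h ∣ f) : k ≤ d ∧ ∃ g, g.IsHomogeneous (d - k) ∧ f = h * g := by
  let _ : GradedRing (homogeneousSubmodule σ K) := gradedAlgebra
  obtain ⟨g, rfl⟩ := hdvd
  have component_eq : (DirectSum.decompose (homogeneousSubmodule σ K) (h * g) d : _) = h * g :=
    DirectSum.decompose_of_mem_same (homogeneousSubmodule σ K) hf
  have hkd : k ≤ d := by
    by_contra hkd
    refine hf0 (component_eq.symm.trans ?_)
    exact DirectSum.coe_decompose_mul_of_left_mem_of_not_le (homogeneousSubmodule σ K) hh hkd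
  rw [DirectSum.coe_decompose_mul_of_left_mem_of_le (homogeneousSubmodule σ K) hh hkd]
    at component_eq
  exact ⟨hkd, _, (DirectSum.decompose (homogeneousSubmodule σ K) g (d - k)).2, component_eq.symm⟩

lemma mem_idealOfVars_pow_iff_of_isHomogeneous (hf : f.IsHomogeneous k) (hf0 : f ≠ 0) :
    f ∈ idealOfVars σ K ^ m ↔ m ≤ k := by
  have degree_eq (s : σ →₀ ℕ) (hs : s ∈ f.support) : s.degree = k := by
    rw [Finsupp.degree_eq_weight_one]
    exact hf (mem_support_iff.mp hs)
  rw [mem_pow_idealOfVars_iff]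
  refine ⟨fun hm => ?_, fun hm s hs => by rwa [degree_eq s hs]⟩
  obtain ⟨s, hs⟩ := support_nonempty.mpr hf0
  exact degree_eq s hs ▸ hm s hs

/-- The least degree in which a form `∑ x₀ʲ fⱼ` of the fat point ideal can have `fⱼ ≠ 0`: the
off-line point requires `deg fⱼ ≥ m`, the `l` points on the line require `deg fⱼ ≥ l (m - j)`. -/
def initialDegree (l m j : ℕ) : ℕ := max (m + j) (l * (m - j) + j)

/-- The space of the coefficients `fⱼ` of the forms `∑ x₀ʲ fⱼ` of degree `d` in the fat point ideal,
where `h` is the form of degree `l` cutting out the points on the line `x₀ = 0`. -/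
noncomputable def coeffSpace (h : MvPolynomial σ K) (l m d j : ℕ) :
    Submodule K (MvPolynomial σ K) :=
  if initialDegree l m j ≤ d then
    Submodule.span K {h ^ (m - j)} * homogeneousSubmodule σ K (d - j - l * (m - j))
  else ⊥

lemma mem_coeffSpace_iff (hh : h.IsHomogeneous l) :
    f ∈ coeffSpace h l m d j ↔ h ^ (m - j) ∣ f ∧ f ∈ idealOfVars σ K ^ m ∧
      (f = 0 ∨ ∃ k, j + k = d ∧ f.IsHomogeneous k) := by
  rcases eq_or_ne f 0 with rfl | hf0
  · simp
  have hpow : (h ^ (m - j)).IsHomogeneous (l * (m - j)) := hh.pow (m - j)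
  rw [coeffSpace, initialDegree]
  constructor
  · intro hf
    split_ifs at hf with hd
    · obtain ⟨g, hg, rfl⟩ := Submodule.mem_span_singleton_mul.mp hf
      have hprod : (h ^ (m - j) * g).IsHomogeneous (d - j) := by
        convert hpow.mul hg using 1
        lia
      exact ⟨dvd_mul_right _ _,
        (mem_idealOfVars_pow_iff_of_isHomogeneous hprod hf0).mpr (by lia),
        Or.inr ⟨d - j, by lia, hprod⟩⟩
    · exact absurd hf hf0
  · rintro ⟨hdvd, hf, h0 | ⟨k, rfl, hk⟩⟩
    · exact absurd h0 hf0
    have hmk := (mem_idealOfVars_pow_iff_of_isHomogeneous hk hf0).mp hf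
    obtain ⟨hle, g, hg, rfl⟩ := exists_isHomogeneous_eq_mul_of_dvd hpow hk hf0 hdvd
    rw [if_pos (by lia), Nat.add_sub_cancel_left]
    exact Submodule.mem_span_singleton_mul.mpr ⟨g, hg, rfl⟩

lemma coeffSpace_eq_bot (hd : d < initialDegree l m j) : coeffSpace h l m d j = ⊥ :=
  if_neg hd.not_ge

instance [Finite σ] (h : MvPolynomial σ K) (l m d j : ℕ) :
    Module.Finite K (coeffSpace h l m d j) := by
  have homogeneous_finite : (homogeneousSubmodule σ K (d - j - l * (m - j))).FG :=
    homogeneousSubmodule_fg _ _ _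
  rw [coeffSpace, Module.Finite.iff_fg]
  split_ifs
  · exact (Submodule.fg_span_singleton _).mul homogeneous_finite
  · exact Submodule.fg_bot

lemma finrank_span_singleton_mul {A : Type*} [CommRing A] [IsDomain A] [Algebra K A] {a : A}
    (ha : a ≠ 0) (p : Submodule K A) :
    Module.finrank K ↥(Submodule.span K {a} * p) = Module.finrank K p := by
  have mul_injective : Function.Injective (LinearMap.mul K A a) := mul_right_injective₀ ha
  rw [Submodule.mul_eq_map₂, Submodule.map₂_span_singleton_eq_map]
  exact (Submodule.equivMapOfInjective _ mul_injective p).finrank_eq.symm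

lemma finrank_coeffSpace {h : MvPolynomial (Fin 2) K} (h0 : h ≠ 0) :
    Module.finrank K (coeffSpace h l m d j) =
      if initialDegree l m j ≤ d then d - j - l * (m - j) + 1 else 0 := by
  split_ifs with hd
  · rw [coeffSpace, if_pos hd, finrank_span_singleton_mul (pow_ne_zero _ h0),
      finrank_homogeneousSubmodule_fin_two]
  · rw [coeffSpace, if_neg hd, finrank_bot]

lemma homogeneousSubmodule_one_mul_coeffSpace (hd : initialDegree l m j ≤ d) :
    homogeneousSubmodule σ K 1 * coeffSpace h l m d j = coeffSpace h l m (d + 1) j := by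
  have hle : l * (m - j) + j ≤ d := (le_max_right _ _).trans hd
  rw [coeffSpace, coeffSpace, if_pos hd, if_pos (by lia), mul_left_comm,
    ← homogeneousSubmodule_one_pow K (d - j - l * (m - j)), ← pow_succ',
    homogeneousSubmodule_one_pow,
    show d - j - l * (m - j) + 1 = d + 1 - j - l * (m - j) by lia]

lemma coeffSpace_le_succ (hh : h.IsHomogeneous l) :
    coeffSpace h l m d j ≤ coeffSpace h l m (d + 1) (j + 1) := by
  intro f hf
  rw [mem_coeffSpace_iff hh] at hf ⊢
  refine hf.imp (pow_dvd_pow h (by lia)).trans (And.imp_right (Or.imp_right ?_))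
  rintro ⟨k, rfl, hk⟩
  exact ⟨k, by lia, hk⟩

lemma linearStep_coeffSpace_of_le (hh : h.IsHomogeneous l) (hd : initialDegree l m j ≤ d) :
    linearStep (homogeneousSubmodule σ K 1) (coeffSpace h l m d) j =
      coeffSpace h l m (d + 1) j := by
  cases j with
  | zero => exact homogeneousSubmodule_one_mul_coeffSpace hd
  | succ j =>
    rw [linearStep, homogeneousSubmodule_one_mul_coeffSpace hd]
    exact sup_eq_right.mpr (coeffSpace_le_succ hh)

lemma linearStep_coeffSpace_zero_of_lt (hd : d < initialDegree l m 0) :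
    linearStep (homogeneousSubmodule σ K 1) (coeffSpace h l m d) 0 = ⊥ := by
  rw [linearStep, coeffSpace_eq_bot hd, Submodule.mul_bot]

lemma linearStep_coeffSpace_succ_of_lt (hd : d < initialDegree l m (j + 1)) :
    linearStep (homogeneousSubmodule σ K 1) (coeffSpace h l m d) (j + 1) =
      coeffSpace h l m d j := by
  rw [linearStep, coeffSpace_eq_bot hd, Submodule.mul_bot, sup_bot_eq]

instance [Finite σ] (h : MvPolynomial σ K) (l m d : ℕ) : ∀ j, Module.Finite K
    (linearStep (homogeneousSubmodule σ K 1) (coeffSpace h l m d) j) := by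
  have finite_mul (j : ℕ) : (homogeneousSubmodule σ K 1 * coeffSpace h l m d j).FG :=
    (homogeneousSubmodule_fg _ _ _).mul (Module.Finite.iff_fg.mp inferInstance)
  rintro (_ | j)
  · exact Module.Finite.iff_fg.mpr (finite_mul 0)
  · exact Module.Finite.iff_fg.mpr
      ((Module.Finite.iff_fg.mp inferInstance).sup (finite_mul (j + 1)))

/-- The number of minimal generators of degree `d` of the fat point ideal that are visible in the
coefficient of `x₀ʲ`: there are `l` if `d` is the least degree allowed by the off-line point, and
otherwise one if `d` is the least degree allowed by the points on the line. -/
def generatorCount (l m d j : ℕ) : ℕ :=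
  (if m + j = d then l else 0) + if m + j < d ∧ l * (m - j) + j = d then 1 else 0

lemma finrank_coeffSpace_succ {h : MvPolynomial (Fin 2) K} (hh : h.IsHomogeneous l) (h0 : h ≠ 0)
    (hl : 0 < l) (hd : l * (2 * m - (d + 1) + 1) ≤ m) (hdm : d + 1 ≤ 2 * m) :
    Module.finrank K (coeffSpace h l m (d + 1) j) =
      Module.finrank K (linearStep (homogeneousSubmodule (Fin 2) K 1) (coeffSpace h l m d) j) +
        generatorCount l m (d + 1) j := by
  rw [generatorCount]
  have hmd : m < d + 1 := by nlinarith [Nat.sub_add_cancel hdm]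
  rcases le_or_gt (initialDegree l m j) d with hj | hj
  · rw [linearStep_coeffSpace_of_le hh hj]
    rw [initialDegree] at hj
    rw [if_neg (by lia), if_neg (by lia), add_zero, add_zero]
  cases j with
  | zero =>
    rw [linearStep_coeffSpace_zero_of_lt hj, finrank_bot, finrank_coeffSpace h0]
    rw [initialDegree] at hj ⊢
    split_ifs <;> lia
  | succ j =>
    rw [linearStep_coeffSpace_succ_of_lt hj, finrank_coeffSpace h0, finrank_coeffSpace h0]
    rw [initialDegree] at hj ⊢
    rw [initialDegree]
    rcases eq_or_ne (m + (j + 1)) (d + 1) with hjd | hjd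
    · obtain rfl : d = m + j := by lia
      have hs : 2 * m - (m + j + 1) + 1 = m - j := by lia
      have hs' : m - j = m - (j + 1) + 1 := by lia
      rw [hs] at hd
      rw [hs', mul_add_one] at hd ⊢
      split_ifs <;> lia
    · rcases le_or_gt m (j + 1) with hmj | hmj
      · rw [Nat.sub_eq_zero_of_le hmj, mul_zero] at hj ⊢
        split_ifs <;> lia
      · rw [show m - j = m - (j + 1) + 1 by lia, mul_add_one]
        split_ifs <;> lia

lemma sum_generatorCount (hl : 0 < l) (hd : l * (2 * m - d + 1) ≤ m) (hdm : d ≤ 2 * m) :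
    ∑ j ∈ Finset.range (d + 1), generatorCount l m d j = l + if l - 1 ∣ d - m then 1 else 0 := by
  obtain ⟨l, rfl⟩ : ∃ k, l = k + 1 := ⟨l - 1, by lia⟩
  obtain ⟨s, hs⟩ : ∃ s, d + s = 2 * m := ⟨2 * m - d, by lia⟩
  rw [show 2 * m - d = s by lia] at hd
  have hmd : m < d := by nlinarith
  have point_sum : ∑ j ∈ Finset.range (d + 1), (if m + j = d then l + 1 else 0) = l + 1 := by
    have hj (j : ℕ) : m + j = d ↔ j = d - m := by lia
    simp only [hj]
    rw [Finset.sum_ite_eq', if_pos (Finset.mem_range.mpr (by lia))]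
  have line_iff (j : ℕ) (hj : j < m) : (l + 1) * (m - j) + j = d ↔ l * (m - j) = d - m := by
    rw [add_one_mul]
    lia
  simp only [generatorCount]
  rw [Finset.sum_add_distrib, point_sum, Nat.add_sub_cancel]
  congr 1
  split_ifs with hdvd
  · obtain ⟨c, hc⟩ := hdvd
    have hl0 : 0 < l := Nat.pos_of_ne_zero (by rintro rfl; lia)
    have hm : m = l * c + s := by lia
    have hsc : s < c := by nlinarith
    have hcm : c ≤ m := by nlinarith
    rw [Finset.sum_eq_single (m - c)]
    · exact if_pos ⟨by lia, (line_iff _ (by lia)).mpr (by rw [hc, Nat.sub_sub_self hcm])⟩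
    · rintro j - hj
      refine if_neg fun ⟨hlt, h⟩ => hj ?_
      have := Nat.eq_of_mul_eq_mul_left hl0 (((line_iff j (by lia)).mp h).trans hc)
      lia
    · exact fun hj => absurd (Finset.mem_range.mpr (by lia)) hj
  · refine Finset.sum_eq_zero fun j _ => if_neg ?_
    rintro ⟨hlt, hj⟩
    exact hdvd ⟨m - j, ((line_iff j (by lia)).mp hj).symm⟩

end CoefficientSpaces

section Expansion

variable {K : Type*} [Field K] {n : ℕ}

/-- The expansion of polynomials in powers of the first coordinate of the coordinate system `e`. -/
noncomputable def coordExpansion (e : (Fin (n + 1) → K) ≃ₗ[K] (Fin (n + 1) → K)) :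
    MvPolynomial (Fin (n + 1)) K ≃ₐ[K] Polynomial (MvPolynomial (Fin n) K) :=
  (linearSubstEquiv e.symm).trans (finSuccEquiv K n)

variable {e : (Fin (n + 1) → K) ≃ₗ[K] (Fin (n + 1) → K)} {F : MvPolynomial (Fin (n + 1)) K}

lemma map_coordExpansion_homogeneousSubmodule_one :
    (homogeneousSubmodule (Fin (n + 1)) K 1).map (coordExpansion e).toLinearMap =
      Submodule.span K {Polynomial.X} ⊔
        (homogeneousSubmodule (Fin n) K 1).map Polynomial.CAlgHom.toLinearMap := by
  rw [← map_finSuccEquiv_homogeneousSubmodule_one]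
  conv_rhs => rw [← map_linearSubstEquiv_homogeneousSubmodule e.symm 1]
  exact Submodule.map_comp (linearSubstEquiv e.symm).toLinearMap (finSuccEquiv K n).toLinearMap _

lemma isHomogeneous_iff_coeff_coordExpansion {d : ℕ} :
    F.IsHomogeneous d ↔ ∀ j, (coordExpansion e F).coeff j = 0 ∨
      ∃ k, j + k = d ∧ ((coordExpansion e F).coeff j).IsHomogeneous k := by
  rw [← linearSubstEquiv_isHomogeneous_iff e.symm, isHomogeneous_iff_coeff_finSuccEquiv]
  rfl

lemma mem_pointIdeal_pow_iff_linearSubstEquiv_symm {m : ℕ} {q : Fin (n + 1) → K} :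
    F ∈ pointIdeal q ^ m ↔ linearSubstEquiv e.symm F ∈ pointIdeal (e q) ^ m := by
  refine mem_pow_iff_of_ringEquiv (linearSubstEquiv e.symm).toRingEquiv fun G => ?_
  have h := linearSubst_mem_pointIdeal_iff e.symm.toLinearMap (q := e q) (F := G)
  rw [LinearEquiv.coe_coe, e.symm_apply_apply] at h
  exact h.symm

lemma mem_pointIdeal_pow_iff_coeff_mem_idealOfVars_pow {m : ℕ} {q : Fin (n + 1) → K}
    (hq : e q = Pi.single 0 1) :
    F ∈ pointIdeal q ^ m ↔ ∀ j, (coordExpansion e F).coeff j ∈ idealOfVars (Fin n) K ^ m := by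
  have hq' : e q = Fin.cons 1 0 := by
    rw [hq]
    ext i
    cases i using Fin.cases <;> simp
  rw [mem_pointIdeal_pow_iff_linearSubstEquiv_symm (e := e), hq',
    mem_pointIdeal_cons_one_zero_pow_iff]
  rfl

lemma tail_coord_inj {u v : Fin (n + 1) → K} (huv : e u 0 = e v 0) :
    Fin.tail (e u) = Fin.tail (e v) ↔ u = v := by
  refine ⟨fun h => e.injective ?_, fun h => h ▸ rfl⟩
  rw [← Fin.cons_self_tail (e u), h, huv, Fin.cons_self_tail]

lemma tail_coord_ne_zero {u : Fin (n + 1) → K} (hu : u ≠ 0) (hu0 : e u 0 = 0) :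
    Fin.tail (e u) ≠ 0 := by
  have tail_zero : Fin.tail (e 0) = 0 := by
    rw [map_zero]
    rfl
  rw [← tail_zero, Ne, tail_coord_inj (by rw [hu0, map_zero, Pi.zero_apply])]
  exact hu

lemma smul_tail_coord_ne {u v : Fin (n + 1) → K} {c : K} (huv : c • u ≠ v) (hu0 : e u 0 = 0)
    (hv0 : e v 0 = 0) : c • Fin.tail (e u) ≠ Fin.tail (e v) := by
  have tail_smul : Fin.tail (e (c • u)) = c • Fin.tail (e u) := by
    rw [map_smul]
    rfl
  rw [← tail_smul, Ne, tail_coord_inj (by rw [map_smul, Pi.smul_apply, hu0, hv0, smul_zero])]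
  exact huv

lemma mem_pointIdeal_pow_iff_pointForm_pow_dvd_coeff {m : ℕ} {e : (Fin 3 → K) ≃ₗ[K] (Fin 3 → K)}
    {F : MvPolynomial (Fin 3) K} {q : Fin 3 → K} (hq : q ≠ 0) (hq0 : e q 0 = 0) :
    F ∈ pointIdeal q ^ m ↔
      ∀ j, pointForm (Fin.tail (e q)) ^ (m - j) ∣ (coordExpansion e F).coeff j := by
  have cons_tail : e q = Fin.cons 0 (Fin.tail (e q)) := by
    rw [← hq0, Fin.cons_self_tail]
  rw [mem_pointIdeal_pow_iff_linearSubstEquiv_symm (e := e), cons_tail,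
    mem_pointIdeal_cons_zero_pow_iff (tail_coord_ne_zero hq hq0)]
  rfl

end Expansion

section FatPoints

variable {K : Type*} [Field K]

lemma oneGen_succ (J : Ideal (MvPolynomial (Fin 3) K)) (d : ℕ) :
    oneGen J (d + 1) = homogeneousSubmodule (Fin 3) K 1 * degComp J d := by
  rw [Submodule.mul_eq_span_mul_set, oneGen, Nat.add_sub_cancel]
  congr 1
  ext F
  simp [Set.mem_mul, eq_comm]

lemma vnum_succ_add_finrank_mul {S : Type*} [CommRing S] [Algebra K S]
    (ψ : MvPolynomial (Fin 3) K ≃ₐ[K] S) (J : Ideal (MvPolynomial (Fin 3) K)) (d : ℕ) :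
    vnum J (d + 1) + Module.finrank K ↥((homogeneousSubmodule (Fin 3) K 1).map ψ.toLinearMap *
      (degComp J d).map ψ.toLinearMap) =
      Module.finrank K ((degComp J (d + 1)).map ψ.toLinearMap) := by
  have oneGen_le : oneGen J (d + 1) ≤ degComp J (d + 1) := by
    rw [oneGen_succ, Submodule.mul_le]
    rintro f hf g ⟨hgJ, hg⟩
    exact ⟨J.mul_mem_left f hgJ, add_comm 1 d ▸ hf.mul hg⟩
  have : Module.Finite K (homogeneousSubmodule (Fin 3) K (d + 1)) :=
    Module.Finite.iff_fg.mpr (homogeneousSubmodule_fg _ _ _)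
  have : Module.Finite K (degComp J (d + 1)) := Submodule.finiteDimensional_of_le inf_le_right
  have map_mul : (homogeneousSubmodule (Fin 3) K 1).map ψ.toLinearMap *
      (degComp J d).map ψ.toLinearMap = (oneGen J (d + 1)).map ψ.toLinearMap := by
    rw [oneGen_succ]
    exact (Submodule.map_mul _ _ ψ.toAlgHom).symm
  have finrank_map (p : Submodule K (MvPolynomial (Fin 3) K)) :
      Module.finrank K (p.map ψ.toLinearMap) = Module.finrank K p :=
    (Submodule.equivMapOfInjective ψ.toLinearMap ψ.injective p).finrank_eq.symm
  rw [map_mul, finrank_map, finrank_map, ← (Submodule.comapSubtypeEquivOfLe oneGen_le).finrank_eq]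
  exact Submodule.finrank_quotient_add_finrank _

variable {h : MvPolynomial (Fin 2) K} {l m : ℕ} {e : (Fin 3 → K) ≃ₗ[K] (Fin 3 → K)}
  {J : Ideal (MvPolynomial (Fin 3) K)}

lemma map_coordExpansion_degComp (hh : h.IsHomogeneous l)
    (hJ : ∀ F, F ∈ J ↔ ∀ j, h ^ (m - j) ∣ (coordExpansion e F).coeff j ∧
      (coordExpansion e F).coeff j ∈ idealOfVars (Fin 2) K ^ m) (d : ℕ) :
    (degComp J d).map (coordExpansion e).toLinearMap = coeffwise (coeffSpace h l m d) := by
  have mem_iff (F : MvPolynomial (Fin 3) K) :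
      F ∈ degComp J d ↔ coordExpansion e F ∈ coeffwise (coeffSpace h l m d) := by
    simp only [degComp, Submodule.mem_inf, Submodule.restrictScalars_mem, hJ,
      mem_homogeneousSubmodule, isHomogeneous_iff_coeff_coordExpansion (e := e), mem_coeffwise,
      mem_coeffSpace_iff hh, ← forall_and, and_assoc]
  ext G
  refine (Submodule.mem_map_equiv _ (e := (coordExpansion e).toLinearEquiv)).trans ?_
  rw [mem_iff]
  exact iff_of_eq (congrArg (· ∈ _) ((coordExpansion e).apply_symm_apply G))

lemma vnum_succ_eq_sum_generatorCount (hh : h.IsHomogeneous l) (h0 : h ≠ 0)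
    (hJ : ∀ F, F ∈ J ↔ ∀ j, h ^ (m - j) ∣ (coordExpansion e F).coeff j ∧
      (coordExpansion e F).coeff j ∈ idealOfVars (Fin 2) K ^ m)
    (hl : 0 < l) {d : ℕ} (hd : l * (2 * m - (d + 1) + 1) ≤ m) (hdm : d + 1 ≤ 2 * m) :
    vnum J (d + 1) = ∑ j ∈ Finset.range (d + 2), generatorCount l m (d + 1) j := by
  have coeffSpace_bot {d j : ℕ} (hj : d < j) : coeffSpace h l m d j = ⊥ :=
    coeffSpace_eq_bot (hj.trans_le ((Nat.le_add_left j m).trans (le_max_left _ _)))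
  have linearStep_bot : ∀ j, d + 2 ≤ j →
      linearStep (homogeneousSubmodule (Fin 2) K 1) (coeffSpace h l m d) j = ⊥ := by
    rintro (_ | j) hj
    · lia
    · rw [linearStep, coeffSpace_bot (by lia), coeffSpace_bot (by lia), Submodule.mul_bot,
        sup_bot_eq]
  have key := vnum_succ_add_finrank_mul (coordExpansion e) J d
  rw [map_coordExpansion_homogeneousSubmodule_one, map_coordExpansion_degComp hh hJ,
    map_coordExpansion_degComp hh hJ, span_X_sup_map_C_mul_coeffwise,
    finrank_coeffwise linearStep_bot, finrank_coeffwise fun j hj => coeffSpace_bot hj] at key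
  simp only [finrank_coeffSpace_succ hh h0 hl hd hdm, Finset.sum_add_distrib] at key
  exact Nat.add_right_cancel (key.trans (add_comm _ _))

lemma castSucc_ne_zero_of_smul_ne {V : Type*} [AddCommGroup V] [Module K V] {p : Fin (l + 1) → V}
    (hdist : ∀ i j, i ≠ j → ∀ c : K, c • p i ≠ p j) (i : Fin l) : p i.castSucc ≠ 0 := by
  simpa [eq_comm] using hdist (Fin.last l) i.castSucc (Fin.castSucc_lt_last i).ne' 0

lemma mem_iInf_pointIdeal_pow_iff {p : Fin (l + 1) → Fin 3 → K}
    (hdist : ∀ i j, i ≠ j → ∀ c : K, c • p i ≠ p j)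
    (hon : ∀ i : Fin l, e (p i.castSucc) 0 = 0) (hoff : e (p (Fin.last l)) = Pi.single 0 1)
    (F : MvPolynomial (Fin 3) K) :
    F ∈ ⨅ i, pointIdeal (p i) ^ m ↔
      ∀ j, (∏ i : Fin l, pointForm (Fin.tail (e (p i.castSucc)))) ^ (m - j) ∣
          (coordExpansion e F).coeff j ∧
        (coordExpansion e F).coeff j ∈ idealOfVars (Fin 2) K ^ m := by
  have coord_dvd_iff := fun t f => prod_pointForm_pow_dvd_iff (t := t) (f := f)
    (fun i => tail_coord_ne_zero (castSucc_ne_zero_of_smul_ne hdist i) (hon i)) fun i j hij c =>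
      smul_tail_coord_ne (hdist _ _ (Fin.castSucc_injective l |>.ne hij) c) (hon i) (hon j)
  simp only [Submodule.mem_iInf, Fin.forall_fin_succ',
    mem_pointIdeal_pow_iff_pointForm_pow_dvd_coeff (castSucc_ne_zero_of_smul_ne hdist _) (hon _),
    mem_pointIdeal_pow_iff_coeff_mem_idealOfVars_pow hoff, coord_dvd_iff, forall_and]
  rw [forall_comm]

end FatPoints

section Degrees

variable {l ρ m d : ℕ}

lemma degree_add_mul_gt (hm : m = ρ * l * (l - 1)) (hl : 0 < l) (hd : 2 * m - m / l < d) :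
    2 * m < d + ρ * (l - 1) := by
  have hdiv : m / l = ρ * (l - 1) := by
    rw [hm, mul_right_comm, Nat.mul_div_cancel _ hl]
  lia

lemma sub_one_dvd_two_mul_sub_iff (hm : m = ρ * l * (l - 1)) (hd : 2 * m - m / l < d)
    (hdm : d ≤ 2 * m) : l - 1 ∣ 2 * m - d ↔ l - 1 ∣ d - m := by
  have hle : m / l ≤ m := Nat.div_le_self m l
  rw [show 2 * m - d = m - (d - m) by lia]
  exact Nat.dvd_sub_iff_right (by lia) (hm ▸ dvd_mul_left _ _)

lemma exists_add_mul_eq_iff_dvd (hm : m = ρ * l * (l - 1)) (hl : 0 < l)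
    (hd : 2 * m - m / l < d) (hdm : d ≤ 2 * m) :
    (∃ w ≤ ρ - 1, d + w * (l - 1) = 2 * m) ↔ l - 1 ∣ d - m := by
  rw [← sub_one_dvd_two_mul_sub_iff hm hd hdm]
  have hgt := degree_add_mul_gt hm hl hd
  refine ⟨fun ⟨w, _, hw⟩ => ⟨w, by rw [mul_comm]; lia⟩, fun ⟨w, hw⟩ => ⟨w, ?_, ?_⟩⟩
  · have : w < ρ := lt_of_mul_lt_mul_right (a := l - 1) (by rw [mul_comm w]; lia) (Nat.zero_le _)
    lia
  · rw [mul_comm w]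
    lia

lemma exists_add_add_mul_eq_iff_not_dvd (hm : m = ρ * l * (l - 1)) (hl : 2 < l)
    (hd : 2 * m - m / l < d) (hdm : d ≤ 2 * m) :
    (∃ w q : ℕ,
      ((w = 0 ∧ 2 ≤ q ∧ q ≤ l - 2) ∨
        (1 ≤ w ∧ w ≤ ρ - 1 ∧ (q = 0 ∨ (2 ≤ q ∧ q ≤ l - 2))) ∨
        (w = ρ ∧ q = 0)) ∧
      d + q + w * (l - 1) = 2 * m + 1) ↔ ¬ l - 1 ∣ d - m := by
  rw [← sub_one_dvd_two_mul_sub_iff hm hd hdm]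
  have hgt := degree_add_mul_gt hm (by lia) hd
  obtain ⟨t, rfl⟩ : ∃ t, l = t + 1 := ⟨l - 1, by lia⟩
  obtain ⟨s, hs⟩ : ∃ s, d + s = 2 * m := ⟨2 * m - d, by lia⟩
  rw [Nat.add_sub_cancel] at hgt ⊢
  rw [show 2 * m - d = s by lia]
  constructor
  · rintro ⟨w, q, hwq, hq⟩ ⟨c, rfl⟩
    have residue_eq : (q + t * w) % t = (1 + t * c) % t := by
      congr 1
      rw [mul_comm t w]
      lia
    rw [Nat.add_mul_mod_self_left, Nat.add_mul_mod_self_left, Nat.mod_eq_of_lt (by lia),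
      Nat.mod_eq_of_lt (by lia)] at residue_eq
    lia
  · intro hdvd
    have hdiv := Nat.div_add_mod' s t
    have hmod : s % t < t := Nat.mod_lt _ (by lia)
    have hmod0 : s % t ≠ 0 := mt Nat.dvd_of_mod_eq_zero hdvd
    have hlt : s / t < ρ := (Nat.div_lt_iff_lt_mul (by lia)).mpr (by lia)
    rcases eq_or_ne (s % t + 1) t with hq | hq
    · exact ⟨s / t + 1, 0, by lia, by rw [add_one_mul]; lia⟩
    · exact ⟨s / t, s % t + 1, by lia, by lia⟩

end Degrees

theorem stmt_5_general {K : Type*} [Field K] {l : ℕ} (hl : 0 < l)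
    (p : Fin (l + 1) → Fin 3 → K)
    (hdist : ∀ i j, i ≠ j → ∀ c : K, c • p i ≠ p j)
    (L : Fin 3 → K)
    (hon : ∀ i : Fin (l + 1), (i : ℕ) < l → ∑ j, L j * p i j = 0)
    (hoff : ∑ j, L j * p (Fin.last l) j ≠ 0)
    (P : Fin (l + 1) → Ideal (MvPolynomial (Fin 3) K))
    (hP : ∀ i F, F ∈ P i ↔ ∀ n, eval (p i) (homogeneousComponent n F) = 0)
    {m : ℕ} {Im : Ideal (MvPolynomial (Fin 3) K)} (hIm : Im = ⨅ i, P i ^ m)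
    {d : ℕ} (hd : 2 * m - m / l < d) (hdm : d ≤ 2 * m) :
    vnum Im d = l + if l - 1 ∣ d - m then 1 else 0 := by
  obtain ⟨e, he_off, he_on⟩ := exists_linearEquiv_apply_eq_single (dotProductEquiv K (Fin 3) L) hoff
  have he_line (i : Fin l) : e (p i.castSucc) 0 = 0 := he_on _ (hon i.castSucc i.2)
  have P_eq (i : Fin (l + 1)) : P i = pointIdeal (p i) :=
    Ideal.ext fun F => (hP i F).trans mem_pointIdeal_iff_eval_homogeneousComponent.symm
  have form_isHomogeneous :=
    prod_pointForm_isHomogeneous fun i : Fin l => Fin.tail (e (p i.castSucc))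
  rw [Fintype.card_fin] at form_isHomogeneous
  have form_ne_zero : ∏ i : Fin l, pointForm (Fin.tail (e (p i.castSucc))) ≠ 0 :=
    Finset.prod_ne_zero_iff.mpr fun i _ =>
      pointForm_ne_zero (tail_coord_ne_zero (castSucc_ne_zero_of_smul_ne hdist i) (he_line i))
  have hdl : l * (2 * m - d + 1) ≤ m :=
    (Nat.mul_le_mul_left l (by lia)).trans (Nat.mul_div_le m l)
  obtain ⟨d, rfl⟩ : ∃ k, d = k + 1 := ⟨d - 1, by lia⟩
  simp only [hIm, P_eq]
  rw [vnum_succ_eq_sum_generatorCount form_isHomogeneous form_ne_zero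
    (mem_iInf_pointIdeal_pow_iff hdist he_line he_off) hl hdl hdm, sum_generatorCount hl hdl hdm]

theorem stmt_5
    (K : Type*) [Field K] [CharZero K]
    -- `l > 2` points on a line plus one point off the line
    (l : ℕ) (hl : 2 < l)
    (p : Fin (l + 1) → Fin 3 → K) (hp0 : ∀ i, p i ≠ 0)
    (hdist : ∀ i j, i ≠ j → ∀ c : K, c • p i ≠ p j)
    (L : Fin 3 → K) (hL : L ≠ 0)
    (hon : ∀ i : Fin (l + 1), (i : ℕ) < l → ∑ j, L j * p i j = 0)
    (hoff : ∑ j, L j * p (Fin.last l) j ≠ 0)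
    -- `P i` is the homogeneous prime ideal of all forms vanishing at `p i`
    (P : Fin (l + 1) → Ideal (MvPolynomial (Fin 3) K))
    (hP : ∀ i F, F ∈ P i ↔ ∀ n, eval (p i) (homogeneousComponent n F) = 0)
    -- `m = ρ·l·(l−1)` with `ρ ≥ 1`
    (ρ : ℕ) (hρ : 1 ≤ ρ) (m : ℕ) (hm : m = ρ * l * (l - 1))
    -- the uniform fat point ideal `I^{(m)} = P_1^m ∩ ⋯ ∩ P_{l+1}^m`
    (Im : Ideal (MvPolynomial (Fin 3) K)) (hIm : Im = ⨅ i, P i ^ m) :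
    ∀ d : ℕ, 2 * m - m / l < d → d ≤ 2 * m →
      -- (i) `d = 2m − w(l−1)` for some `0 ≤ w ≤ ρ − 1`
      ((∃ w : ℕ, w ≤ ρ - 1 ∧ d + w * (l - 1) = 2 * m) → vnum Im d = l + 1) ∧
      -- (ii) `d = 2m + 1 − p − w(l−1)` for admissible `(w, p)`
      ((∃ w q : ℕ,
          ((w = 0 ∧ 2 ≤ q ∧ q ≤ l - 2) ∨
           (1 ≤ w ∧ w ≤ ρ - 1 ∧ (q = 0 ∨ (2 ≤ q ∧ q ≤ l - 2))) ∨
           (w = ρ ∧ q = 0)) ∧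
          d + q + w * (l - 1) = 2 * m + 1) → vnum Im d = l) ∧
      -- (iii) every other degree in this range
      ((¬(∃ w : ℕ, w ≤ ρ - 1 ∧ d + w * (l - 1) = 2 * m)) →
       (¬(∃ w q : ℕ,
          ((w = 0 ∧ 2 ≤ q ∧ q ≤ l - 2) ∨
           (1 ≤ w ∧ w ≤ ρ - 1 ∧ (q = 0 ∨ (2 ≤ q ∧ q ≤ l - 2))) ∨
           (w = ρ ∧ q = 0)) ∧
          d + q + w * (l - 1) = 2 * m + 1)) →
        vnum Im d = 0) := by
  intro d hd hdm
  rw [exists_add_mul_eq_iff_dvd hm (by lia) hd hdm,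
    exists_add_add_mul_eq_iff_not_dvd hm hl hd hdm,
    stmt_5_general (by lia) p hdist L hon hoff P hP hIm hd hdm]
  split_ifs <;> simp_all
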